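/- For any two matrices G, H ∈ SL(2, ℂ[z,z⁻¹]), G can be irreducibly lifted from H in infinitely many different ways: the set of pairs (K, cascade), where K ∈ ℂˣ and the cascade is an irreducible lifting cascade (of any length, with arbitrary Laurent polynomial lifting filters) such that G = D_K · (product of the cascade) · H, is infinite. -/

import Mathlib

open LaurentPolynomial Matrix

noncomputable section

abbrev R2 : Type := LaurentPolynomial ℂ
abbrev SL2 : Type := Matrix.SpecialLinearGroup (Fin 2) R2

/-- Upper-triangular lifting matrix υ(S) = [[1, S],[0, 1]]. -/
def upl (S : R2) : SL2 := ⟨!![1, S; 0, 1], by simp [Matrix.det_fin_two_of]⟩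

/-- Lower-triangular lifting matrix λ(S) = [[1, 0],[S, 1]]. -/
def lowl (S : R2) : SL2 := ⟨!![1, 0; S, 1], by simp [Matrix.det_fin_two_of]⟩
/-- Gain scaling matrix D_K = diag(1/K, K) as an element of SL(2, ℂ[z,z⁻¹]). -/
def gain (K : ℂˣ) : SL2 :=
  ⟨!![C ((K⁻¹ : ℂˣ) : ℂ), 0; 0, C (K : ℂ)], by
    simp [Matrix.det_fin_two_of, ← _root_.map_mul, inv_mul_cancel₀ (Units.ne_zero K)]⟩
/-- A lifting step: an update characteristic (false = lowpass = υ, true = highpass = λ)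
together with a lifting filter. -/
def liftMat (p : Bool × R2) : SL2 := if p.1 then lowl p.2 else upl p.2

/-- The product of a lifting cascade `L = [(m₀,S₀),…,(m_{N-1},S_{N-1})]`,
namely `M_{N-1} ⋯ M_1 M_0`. -/
def cascListProd (L : List (Bool × R2)) : SL2 := (L.reverse.map liftMat).prod

/-- A cascade is irreducible if all lifting filters are nonzero and consecutive
update characteristics differ. -/
def IrredList (L : List (Bool × R2)) : Prop :=
  (∀ p ∈ L, p.2 ≠ 0) ∧ L.Chain' (fun p q => p.1 ≠ q.1)


lemma val_mul (A B : SL2) : (A * B).1 = A.1 * B.1 := rfl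
lemma upl_val (S : R2) : (upl S).1 = !![1, S; 0, 1] := rfl
lemma lowl_val (S : R2) : (lowl S).1 = !![1, 0; S, 1] := rfl

def elemSub : Subgroup SL2 := Subgroup.closure (Set.range liftMat)

lemma upl_mem (S : R2) : upl S ∈ elemSub :=
  Subgroup.subset_closure ⟨(false, S), by simp [liftMat]⟩

lemma lowl_mem (S : R2) : lowl S ∈ elemSub :=
  Subgroup.subset_closure ⟨(true, S), by simp [liftMat]⟩

lemma mem_of_zero (M : SL2) (h : M.1 0 0 = 0) : M ∈ elemSub := by
  have hd := M.2
  rw [Matrix.det_fin_two, h] at hd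
  have : M = upl (M.1 0 1) * lowl (M.1 1 0) * upl (M.1 0 1 * (1 - M.1 1 1)) := by
    apply Subtype.ext
    ext1 i j
    fin_cases i <;> fin_cases j <;>
      simp [val_mul, upl_val, lowl_val, Matrix.mul_apply, Fin.sum_univ_two, h]
    · linear_combination hd
    · left
      linear_combination -hd
    · linear_combination (1 - M.1 1 1) * hd
  rw [this]
  exact mul_mem (mul_mem (upl_mem _) (lowl_mem _)) (upl_mem _)

def weyl : SL2 := ⟨!![0, -1; 1, 0], by simp [Matrix.det_fin_two_of]⟩

lemma weyl_val : weyl.1 = !![0, -1; 1, 0] := rfl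

lemma weyl_mem : weyl ∈ elemSub := mem_of_zero _ (by simp [weyl])

lemma mem_aux (p q : Polynomial ℂ) : ∀ (u v : R2ˣ) (M : SL2),
    M.1 0 0 = Polynomial.toLaurent p * u → M.1 0 1 = Polynomial.toLaurent q * v →
    M ∈ elemSub := by
  induction p, q using EuclideanDomain.GCD.induction with
  | H0 q =>
    intro u v M h0 _
    exact mem_of_zero M (by simpa using h0)
  | H1 p q hp ih =>
    intro u v M h0 h1
    have hq : Polynomial.toLaurent q = Polynomial.toLaurent p * Polynomial.toLaurent (q / p)
        + Polynomial.toLaurent (q % p) := by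
      rw [← map_mul, ← map_add, EuclideanDomain.div_add_mod]
    set S : R2 := -(Polynomial.toLaurent (q / p) * v * (u⁻¹ : R2ˣ)) with hS
    have hu : (u : R2) * (u⁻¹ : R2ˣ) = 1 := u.mul_inv
    have key := ih v (-u) (M * upl S * weyl) ?_ ?_
    · rw [Subgroup.mul_mem_cancel_right _ weyl_mem,
        Subgroup.mul_mem_cancel_right _ (upl_mem S)] at key
      exact key
    · simp [val_mul, upl_val, weyl_val, Matrix.mul_apply, Fin.sum_univ_two, h0, h1]
      rw [hq, hS]
      linear_combination (-(Polynomial.toLaurent p * Polynomial.toLaurent (q / p) * v)) * hu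
    · simp [val_mul, upl_val, weyl_val, Matrix.mul_apply, Fin.sum_univ_two, h0, h1]

lemma mem_all (M : SL2) : M ∈ elemSub := by
  obtain ⟨m, p, hp⟩ := LaurentPolynomial.exists_T_pow (M.1 0 0)
  obtain ⟨n, q, hq⟩ := LaurentPolynomial.exists_T_pow (M.1 0 1)
  obtain ⟨u, hu⟩ := LaurentPolynomial.isUnit_T (R := ℂ) m
  obtain ⟨v, hv⟩ := LaurentPolynomial.isUnit_T (R := ℂ) n
  exact mem_aux p q u⁻¹ v⁻¹ M (by rw [hp, ← hu, Units.mul_inv_cancel_right])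
    (by rw [hq, ← hv, Units.mul_inv_cancel_right])

lemma liftMat_mul (m : Bool) (S T : R2) :
    liftMat (m, S) * liftMat (m, T) = liftMat (m, S + T) := by
  apply Subtype.ext
  ext1 i j
  cases m <;> fin_cases i <;> fin_cases j <;>
    simp [liftMat, val_mul, upl_val, lowl_val, Matrix.mul_apply, Fin.sum_univ_two, add_comm]

lemma liftMat_zero (m : Bool) : liftMat (m, 0) = 1 := by
  apply Subtype.ext
  ext1 i j
  cases m <;> fin_cases i <;> fin_cases j <;> simp [liftMat, upl, lowl]

lemma liftMat_inv (m : Bool) (S : R2) : (liftMat (m, S))⁻¹ = liftMat (m, -S) := by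
  rw [inv_eq_iff_mul_eq_one, liftMat_mul, add_neg_cancel, liftMat_zero]

lemma casc_cons (p : Bool × R2) (L : List (Bool × R2)) :
    cascListProd (p :: L) = cascListProd L * liftMat p := by
  simp [cascListProd]

lemma irred_step (L : List (Bool × R2)) (hL : IrredList L) (m : Bool) (S : R2) :
    ∃ L', IrredList L' ∧ cascListProd L' = cascListProd L * liftMat (m, S) := by
  by_cases hS : S = 0
  · exact ⟨L, hL, by rw [hS, liftMat_zero, mul_one]⟩
  match L, hL with
  | [], _ => exact ⟨[(m, S)], ⟨by simp [hS], by simp [List.Chain']⟩, casc_cons _ _⟩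
  | (m', S') :: L, ⟨h1, h2⟩ =>
    by_cases hm : m = m'
    · subst hm
      by_cases hz : S' + S = 0
      · refine ⟨L, ⟨fun p hp => h1 p (List.mem_cons_of_mem _ hp), List.IsChain.tail h2⟩, ?_⟩
        rw [casc_cons, mul_assoc, liftMat_mul, hz, liftMat_zero, mul_one]
      · refine ⟨(m, S' + S) :: L, ⟨?_, ?_⟩, ?_⟩
        · intro p hp
          rcases List.mem_cons.1 hp with rfl | hp
          · exact hz
          · exact h1 p (List.mem_cons_of_mem _ hp)
        · unfold List.Chain' at *
          rw [List.isChain_cons] at *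
          exact h2
        · rw [casc_cons, casc_cons, mul_assoc, liftMat_mul]
    · refine ⟨(m, S) :: (m', S') :: L, ⟨?_, ?_⟩, casc_cons _ _⟩
      · intro p hp
        rcases List.mem_cons.1 hp with rfl | hp
        · exact hS
        · exact h1 p hp
      · exact List.IsChain.cons_cons hm h2

lemma exists_irred (M : SL2) : ∃ L, IrredList L ∧ cascListProd L = M := by
  induction mem_all M using Subgroup.closure_induction_right with
  | one => exact ⟨[], ⟨by simp, by simp [List.Chain']⟩, by simp [cascListProd]⟩
  | mul_right x hx y hy ih =>
    obtain ⟨L, hL, rfl⟩ := ih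
    obtain ⟨⟨m, S⟩, rfl⟩ := hy
    exact irred_step L hL m S
  | mul_inv_cancel x hx y hy ih =>
    obtain ⟨L, hL, rfl⟩ := ih
    obtain ⟨⟨m, S⟩, rfl⟩ := hy
    rw [liftMat_inv]
    exact irred_step L hL m (-S)

/-- any G ∈ SL(2, ℂ[z,z⁻¹]) can be irreducibly lifted from any
H ∈ SL(2, ℂ[z,z⁻¹]) in infinitely many different ways. -/
theorem stmt6 (G H : SL2) :
    {P : ℂˣ × List (Bool × R2) |
        IrredList P.2 ∧ G = gain P.1 * cascListProd P.2 * H}.Infinite := by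
  choose f hf hf' using fun K : ℂˣ => exists_irred ((gain K)⁻¹ * G * H⁻¹)
  have hinf : Infinite ℂˣ := by
    refine Infinite.of_injective
      (fun n : ℕ => Units.mk0 ((n : ℂ) + 1) (Nat.cast_add_one_ne_zero n)) ?_
    intro a b hab
    simpa using congrArg Units.val hab
  refine Set.infinite_of_injective_forall_mem (f := fun K : ℂˣ => (K, f K)) ?_ ?_
  · intro a b hab
    exact (Prod.ext_iff.1 hab).1
  · intro K
    refine ⟨hf K, ?_⟩
    simp only [hf']
    group
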